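/- Let q be an integer with q ≥ 3 and let A ⊂ ℚ be a finite set with 2 ≤ #A ≤ √q. Then for every integer p ≥ 2 with gcd(p,q) = 1, there is a uniform finite upper bound on #((D_p + α) ∩ K(q,A)) over all real numbers α. -/

import Mathlib

open MeasureTheory

/-- The self-similar set `K(q,A) = { ∑_{i=1}^∞ a_i/q^i : a_i ∈ A }`. -/
noncomputable def Kset (q : ℕ) (A : Finset ℚ) : Set ℝ :=
  { x : ℝ | ∃ a : ℕ → ℚ, (∀ i, a i ∈ A) ∧ x = ∑' i : ℕ, (a i : ℝ) / (q : ℝ) ^ (i + 1) }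

/-- The set `D_p = ⋃_{n≥1} ℤ/pⁿ` of rationals with a finite `p`-ary expansion. -/
def Dset (p : ℕ) : Set ℝ :=
  { x : ℝ | ∃ n : ℕ, 1 ≤ n ∧ ∃ m : ℤ, x = (m : ℝ) / (p : ℝ) ^ n }

/-!
Two points of a translate of `D_p` that lie in `K(q, A)` differ by a point of
`D_p ∩ K(q, A - A)`, and `#(A - A) < q` when `2 ≤ #A ≤ √q`; so it suffices that `D_p ∩ K(q, B)` is
finite whenever `#B < q`. Let `N` be a common denominator of `B` and let `m / (N d) ∈ K(q, B)` with
`d ∣ pⁿ` and `m` prime to `d`. Since every `x ∈ K(q, B)` has some `q x - b` with `b ∈ B` in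
`K(q, B)`, this set contains points `m' / (N d)` with `m' ≡ qᵏ m` modulo `d` for every `k`, hence at
least `ord_d(q)` points with denominator `N d`. By the lifting-the-exponent lemma `ord_d(q)` is at
least a constant times `d`, whereas covering `K(q, B)` by `(#B)ᵏ` intervals of length of order
`q⁻ᵏ ≈ d⁻¹` shows that it contains only `O((#B)ᵏ)` such points. As `#B < q`, this bounds `d`.
-/

open Filter
open scoped Pointwise

-- The square is there for `r = 2`, where lifting the exponent requires `4 ∣ a - 1`.
lemma prime_pow_dvd_mul_sub_one {r : ℕ} (hr : r.Prime) {a : ℤ} (ha : (r : ℤ) ^ 2 ∣ a - 1)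
    {k l : ℕ} (h : (r : ℤ) ^ k ∣ a ^ l - 1) : (r : ℤ) ^ k ∣ l * (a - 1) := by
  have hrZ : Prime (r : ℤ) := Nat.prime_iff_prime_int.mp hr
  have hra : (r : ℤ) ∣ a - 1 := (dvd_pow_self _ two_ne_zero).trans ha
  have hndvd : ¬ (r : ℤ) ∣ a := fun hdvd => hrZ.not_dvd_one (by simpa using dvd_sub hdvd hra)
  have lte : emultiplicity (r : ℤ) (a ^ l - 1) =
      emultiplicity (r : ℤ) (a - 1) + emultiplicity (r : ℤ) l := by
    rcases hr.eq_two_or_odd' with rfl | hodd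
    · simpa using Int.two_pow_sub_pow' l (y := 1) (by simpa using ha) (by simpa using hndvd)
    · simpa [Int.natCast_emultiplicity] using
        Int.emultiplicity_pow_sub_pow hr hodd (y := 1) hra hndvd l
  rwa [pow_dvd_iff_le_emultiplicity, emultiplicity_mul hrZ, add_comm, ← lte,
    ← pow_dvd_iff_le_emultiplicity]

lemma dvd_mul_sub_one_of_dvd_pow_sub_one {p d n l : ℕ} {a : ℤ} (ha : (p : ℤ) ^ 2 ∣ a - 1)
    (hd : d ∣ p ^ n) (h : (d : ℤ) ∣ a ^ l - 1) : (d : ℤ) ∣ l * (a - 1) := by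
  rw [Int.natCast_dvd, Nat.dvd_iff_prime_pow_dvd_dvd]
  intro r k hr hrd
  rcases eq_or_ne k 0 with rfl | hk
  · simp
  have hrp : r ∣ p := hr.dvd_of_dvd_pow ((dvd_pow_self r hk).trans (hrd.trans hd))
  rw [← Int.natCast_dvd, Nat.cast_pow]
  refine prime_pow_dvd_mul_sub_one hr ((pow_dvd_pow_of_dvd ?_ 2).trans ha) (dvd_trans ?_ h)
  · exact_mod_cast hrp
  · exact_mod_cast hrd

lemma exists_le_mul_orderOf {p q : ℕ} (hq : 1 < q) (hpq : p.Coprime q) :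
    ∃ h : ℕ, ∀ d n : ℕ, d ∣ p ^ n → d ≤ h * orderOf (q : ZMod d) := by
  have hp : 0 < p := by
    refine Nat.pos_of_ne_zero ?_
    rintro rfl
    exact hq.ne' (q.coprime_zero_left.mp hpq)
  set t := (p ^ 2).totient
  have ht : t ≠ 0 := (Nat.totient_pos.mpr (by positivity)).ne'
  have hqt : 1 < q ^ t := Nat.one_lt_pow ht hq
  have hdvd : (p : ℤ) ^ 2 ∣ (q : ℤ) ^ t - 1 := by
    have := (Nat.ModEq.pow_totient (hpq.symm.pow_right 2)).symm.dvd
    exact_mod_cast this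
  refine ⟨q ^ t - 1, fun d n hd => ?_⟩
  have : NeZero d := ⟨fun h0 => by simp [h0, hp.ne'] at hd⟩
  have hunit : IsUnit (q : ZMod d) :=
    (ZMod.isUnit_iff_coprime q d).mpr ((hpq.pow_left n).coprime_dvd_left hd).symm
  set l := orderOf (q : ZMod d)
  have hl : 0 < l := hunit.isOfFinOrder.orderOf_pos
  have hmul : (d : ℤ) ∣ l * ((q : ℤ) ^ t - 1) := by
    refine dvd_mul_sub_one_of_dvd_pow_sub_one hdvd hd ?_
    rw [← ZMod.intCast_zmod_eq_zero_iff_dvd]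
    push_cast
    rw [pow_right_comm, pow_orderOf_eq_one, one_pow, sub_self]
  have hmul' : d ∣ l * (q ^ t - 1) := by
    zify [hqt.le]
    exact hmul
  rw [mul_comm]
  exact Nat.le_of_dvd (Nat.mul_pos hl (by omega)) hmul'

lemma eventually_mul_pow_lt_pow {a b : ℝ} (c : ℝ) (ha : 0 ≤ a) (hab : a < b) :
    ∀ᶠ n : ℕ in atTop, c * a ^ n < b ^ n := by
  have hc : 0 < |c| + 1 := by positivity
  filter_upwards [(isLittleO_pow_pow_of_lt_left ha hab).bound (inv_pos.mpr hc)] with n hn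
  have hb : 0 < b ^ n := pow_pos (ha.trans_lt hab) n
  rw [Real.norm_of_nonneg (pow_nonneg ha n), Real.norm_of_nonneg hb.le, inv_mul_eq_div,
    le_div_iff₀' hc] at hn
  rcases (pow_nonneg ha n).eq_or_lt with h0 | h0
  · simpa [← h0] using hb
  · calc c * a ^ n < (|c| + 1) * a ^ n := by gcongr; linarith [le_abs_self c]
      _ ≤ b ^ n := hn

lemma card_Icc_ceil_floor_le {R : Type*} [CommRing R] [LinearOrder R] [IsStrictOrderedRing R]
    [FloorRing R] (x r : R) :
    (Finset.Icc ⌈x - r⌉ ⌊x + r⌋).card ≤ ⌊2 * r⌋₊ + 1 := by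
  have h : ⌊x + r⌋ - ⌈x - r⌉ ≤ ⌊2 * r⌋ := by
    rw [Int.le_floor]
    push_cast
    linarith [Int.floor_le (x + r), Int.le_ceil (x - r)]
  rw [Int.card_Icc, ← Int.floor_toNat]
  omega

lemma exists_pos_forall_mul_eq_intCast (B : Finset ℚ) :
    ∃ N : ℕ, 0 < N ∧ ∀ b ∈ B, ∃ z : ℤ, (N : ℚ) * b = z := by
  refine ⟨∏ b ∈ B, b.den, Finset.prod_pos fun b _ => b.den_pos, fun b hb => ?_⟩
  obtain ⟨c, hc⟩ := Finset.dvd_prod_of_mem Rat.den hb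
  refine ⟨c * b.num, ?_⟩
  rw [hc]
  push_cast
  rw [← Rat.mul_den_eq_num b]
  ring

lemma card_sub_self_lt {G : Type*} [AddGroup G] [DecidableEq G] {A : Finset G}
    (hA : A.Nontrivial) : (A - A).card < A.card ^ 2 := by
  rw [sq]
  refine Finset.card_sub_le.lt_of_ne fun h => ?_
  obtain ⟨a, ha, b, hb, hab⟩ := hA
  have hdiag : (a, a) = (b, b) :=
    Finset.card_image₂_iff.mp h ⟨ha, ha⟩ ⟨hb, hb⟩ (by simp only [sub_self])
  exact hab (congrArg Prod.fst hdiag)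

section Kset

variable {q : ℕ} {A B : Finset ℚ} {x y C : ℝ}

lemma norm_div_pow_le {a : ℚ} (ha : a ∈ A) (n : ℕ) :
    ‖(a : ℝ) / (q : ℝ) ^ n‖ ≤ (∑ b ∈ A, |(b : ℝ)|) * (q : ℝ)⁻¹ ^ n := by
  rw [norm_div, norm_pow, Real.norm_natCast, inv_pow, ← div_eq_mul_inv]
  gcongr
  exact Finset.single_le_sum (f := fun b : ℚ => |(b : ℝ)|) (fun _ _ => abs_nonneg _) ha

lemma summable_mul_inv_pow_succ (hq : 1 < q) (c : ℝ) :
    Summable fun i : ℕ => c * (q : ℝ)⁻¹ ^ (i + 1) :=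
  ((summable_nat_add_iff 1).mpr <| summable_geometric_of_lt_one (by positivity) <|
    inv_lt_one_of_one_lt₀ <| by exact_mod_cast hq).mul_left c

lemma summable_div_pow_succ (hq : 1 < q) {a : ℕ → ℚ} (ha : ∀ i, a i ∈ A) :
    Summable fun i : ℕ => (a i : ℝ) / (q : ℝ) ^ (i + 1) :=
  (summable_mul_inv_pow_succ hq _).of_norm_bounded fun i => norm_div_pow_le (ha i) (i + 1)

lemma isBounded_Kset (hq : 1 < q) (A : Finset ℚ) : Bornology.IsBounded (Kset q A) := by
  refine isBounded_iff_forall_norm_le.mpr ⟨∑' i : ℕ, (∑ b ∈ A, |(b : ℝ)|) * (q : ℝ)⁻¹ ^ (i + 1), ?_⟩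
  rintro _ ⟨a, ha, rfl⟩
  exact tsum_of_norm_bounded (summable_mul_inv_pow_succ hq _).hasSum
    fun i => norm_div_pow_le (ha i) (i + 1)

lemma exists_mul_sub_mem_Kset (hq : 1 < q) (hx : x ∈ Kset q A) :
    ∃ a ∈ A, (q : ℝ) * x - a ∈ Kset q A := by
  obtain ⟨a, ha, rfl⟩ := hx
  refine ⟨a 0, ha 0, fun i => a (i + 1), fun i => ha (i + 1), ?_⟩
  have hq0 : (q : ℝ) ≠ 0 := by positivity
  rw [(summable_div_pow_succ hq ha).tsum_eq_zero_add, mul_add, ← tsum_mul_left, zero_add, pow_one,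
    mul_div_cancel₀ _ hq0, add_sub_cancel_left]
  refine tsum_congr fun i => ?_
  rw [pow_succ' _ (i + 1), mul_div_assoc', mul_div_mul_left _ _ hq0]

lemma sub_mem_Kset (hq : 1 < q) (hx : x ∈ Kset q A) (hy : y ∈ Kset q B) :
    x - y ∈ Kset q (A - B) := by
  obtain ⟨a, ha, rfl⟩ := hx
  obtain ⟨b, hb, rfl⟩ := hy
  refine ⟨fun i => a i - b i, fun i => Finset.sub_mem_sub (ha i) (hb i), ?_⟩
  rw [← (summable_div_pow_succ hq ha).tsum_sub (summable_div_pow_succ hq hb)]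
  refine tsum_congr fun i => ?_
  rw [← sub_div, Rat.cast_sub]

lemma exists_finset_cover_Kset (hq : 1 < q) (hC : ∀ x ∈ Kset q A, |x| ≤ C) (n : ℕ) :
    ∃ P : Finset ℝ, P.card ≤ A.card ^ n ∧ ∀ x ∈ Kset q A, ∃ s ∈ P, |x - s| ≤ C / (q : ℝ) ^ n := by
  induction n with
  | zero => exact ⟨{0}, by simp, by simpa using hC⟩
  | succ n ih =>
    obtain ⟨P, hcard, hP⟩ := ih
    refine ⟨Finset.image₂ (fun (a : ℚ) s => ((a : ℝ) + s) / q) A P, ?_, fun x hx => ?_⟩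
    · rw [pow_succ']
      exact (Finset.card_image₂_le _ _ _).trans (Nat.mul_le_mul_left _ hcard)
    · obtain ⟨a, ha, hxa⟩ := exists_mul_sub_mem_Kset hq hx
      obtain ⟨s, hs, hxs⟩ := hP _ hxa
      refine ⟨_, Finset.mem_image₂_of_mem ha hs, ?_⟩
      have hq0 : (0 : ℝ) < q := by positivity
      have : x - (a + s) / q = (q * x - a - s) / q := by field_simp; ring
      rw [this, abs_div, abs_of_pos hq0, pow_succ, ← div_div]
      gcongr

/-- The set of integers `m` such that `m / e ∈ K(q, A)`, i.e. the points of `K(q, A)` of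
denominator `e`, each represented by its (not necessarily reduced) numerator. -/
def numerators (q : ℕ) (A : Finset ℚ) (e : ℝ) : Set ℤ :=
  { m : ℤ | (m : ℝ) / e ∈ Kset q A }

lemma mem_numerators {e : ℝ} {m : ℤ} : m ∈ numerators q A e ↔ (m : ℝ) / e ∈ Kset q A :=
  Iff.rfl

lemma encard_numerators_le (hq : 1 < q) (hC : ∀ x ∈ Kset q A, |x| ≤ C) {e : ℝ} (he : 0 < e)
    (n : ℕ) :
    (numerators q A e).encard ≤ (A.card ^ n * (⌊2 * (C / (q : ℝ) ^ n * e)⌋₊ + 1) : ℕ) := by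
  obtain ⟨P, hcard, hP⟩ := exists_finset_cover_Kset hq hC n
  set r := C / (q : ℝ) ^ n * e
  let F : Finset ℤ := P.biUnion fun s => Finset.Icc ⌈s * e - r⌉ ⌊s * e + r⌋
  have hsub : numerators q A e ⊆ F := by
    intro m hm
    obtain ⟨s, hs, hms⟩ := hP _ hm
    have hdist : |(m : ℝ) - s * e| ≤ r := by
      calc |(m : ℝ) - s * e| = |(m : ℝ) / e - s| * e := by
            rw [← abs_of_pos he, ← abs_mul, abs_of_pos he, sub_mul, div_mul_cancel₀ _ he.ne']
        _ ≤ r := by simp only [r]; gcongr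
    obtain ⟨hlo, hhi⟩ := abs_le.mp hdist
    simp only [F, Finset.coe_biUnion, Set.mem_iUnion, Finset.coe_Icc, Set.mem_Icc]
    exact ⟨s, hs, Int.ceil_le.mpr (by linarith), Int.le_floor.mpr (by linarith)⟩
  have hF : F.card ≤ A.card ^ n * (⌊2 * r⌋₊ + 1) :=
    (Finset.card_biUnion_le_card_mul P _ _ fun s _ => card_Icc_ceil_floor_le _ r).trans
      (Nat.mul_le_mul_right _ hcard)
  calc (numerators q A e).encard ≤ (F : Set ℤ).encard := Set.encard_le_encard hsub
    _ = F.card := Set.encard_coe_eq_coe_finsetCard F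
    _ ≤ _ := by exact_mod_cast hF

lemma finite_numerators (hq : 1 < q) (A : Finset ℚ) {e : ℝ} (he : 0 < e) :
    (numerators q A e).Finite := by
  obtain ⟨C, hC⟩ := isBounded_iff_forall_norm_le.mp (isBounded_Kset hq A)
  exact Set.finite_of_encard_le_coe (encard_numerators_le hq hC he 0)

variable {N d : ℕ}

lemma exists_mem_numerators_eq_pow_mul (hq : 1 < q) (hN : 0 < N)
    (hA : ∀ a ∈ A, ∃ z : ℤ, (N : ℚ) * a = z) (hd : 0 < d) {m : ℤ}
    (hm : m ∈ numerators q A (N * d)) (k : ℕ) :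
    ∃ m' ∈ numerators q A (N * d), (m' : ZMod d) = (q : ZMod d) ^ k * m := by
  induction k with
  | zero => exact ⟨m, hm, by simp⟩
  | succ k ih =>
    obtain ⟨m', hm', hmod⟩ := ih
    obtain ⟨a, ha, hstep⟩ := exists_mul_sub_mem_Kset hq hm'
    obtain ⟨z, hz⟩ := hA a ha
    have hz' : (N : ℝ) * a = z := by exact_mod_cast hz
    refine ⟨q * m' - d * z, ?_, ?_⟩
    · have : ((q * m' - d * z : ℤ) : ℝ) / (N * d) = q * (m' / (N * d)) - a := by
        push_cast
        rw [← hz']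
        field_simp
      rwa [mem_numerators, this]
    · push_cast
      rw [hmod, ZMod.natCast_self, pow_succ']
      ring

lemma orderOf_le_encard_numerators (hq : 1 < q) (hN : 0 < N)
    (hA : ∀ a ∈ A, ∃ z : ℤ, (N : ℚ) * a = z) (hd : 0 < d) {m : ℤ} (hmd : IsCoprime m d)
    (hm : m ∈ numerators q A (N * d)) :
    (orderOf (q : ZMod d) : ℕ∞) ≤ (numerators q A (N * d)).encard := by
  choose u hu hmod using exists_mem_numerators_eq_pow_mul hq hN hA hd hm
  have hunit : IsUnit (m : ZMod d) := (ZMod.coe_int_isUnit_iff_isCoprime m d).mpr hmd.symm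
  have hinj : Set.InjOn u (Set.Iio (orderOf (q : ZMod d))) := by
    intro i hi j hj hij
    refine pow_injOn_Iio_orderOf hi hj (hunit.mul_right_cancel ?_)
    rw [← hmod, ← hmod, hij]
  calc (orderOf (q : ZMod d) : ℕ∞) = (Set.Iio (orderOf (q : ZMod d))).encard := by
        rw [← (Set.finite_Iio _).cast_ncard_eq, Set.ncard_Iio_nat]
    _ ≤ _ := Set.encard_le_encard_of_injOn (fun k _ => hu k) hinj

lemma exists_forall_denom_le_of_mem_numerators (hq : 1 < q) {p : ℕ} (hpq : p.Coprime q)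
    (hcard : A.card < q) (hN : 0 < N) (hA : ∀ a ∈ A, ∃ z : ℤ, (N : ℚ) * a = z) :
    ∃ D : ℕ, ∀ d n : ℕ, ∀ m : ℤ, d ∣ p ^ n → 0 < d → IsCoprime m d →
      m ∈ numerators q A (N * d) → d ≤ D := by
  obtain ⟨h, hh⟩ := exists_le_mul_orderOf hq hpq
  obtain ⟨C, hC⟩ := isBounded_iff_forall_norm_le.mp (isBounded_Kset hq A)
  set M := ⌊2 * (C * (N * q))⌋₊ + 1
  obtain ⟨K, hK⟩ := eventually_atTop.mp <| eventually_mul_pow_lt_pow ((h * M : ℕ) : ℝ)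
    (Nat.cast_nonneg A.card) (Nat.cast_lt.mpr hcard)
  refine ⟨q ^ K, fun d n m hdp hd hmd hm => ?_⟩
  have hC0 : 0 ≤ C := (norm_nonneg _).trans (hC _ hm)
  set k := Nat.log q d
  have hdk : d < q ^ (k + 1) := Nat.lt_pow_succ_log_self hq d
  have hord : orderOf (q : ZMod d) ≤ A.card ^ k * M := by
    have hcount := (orderOf_le_encard_numerators hq hN hA hd hmd hm).trans
      (encard_numerators_le hq hC (by positivity) k)
    refine (Nat.cast_le.mp hcount).trans ?_
    have hdk' : (d : ℝ) ≤ q ^ k * q := by exact_mod_cast hdk.le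
    have : C / (q : ℝ) ^ k * (N * d) ≤ C * (N * q) := by
      calc C / (q : ℝ) ^ k * (N * d) ≤ C / (q : ℝ) ^ k * (N * (q ^ k * q)) := by gcongr
        _ = C * (N * q) := by field_simp
    simp only [M]
    gcongr
  have hpow : q ^ k ≤ h * M * A.card ^ k := by
    calc q ^ k ≤ d := Nat.pow_log_le_self q hd.ne'
      _ ≤ h * orderOf (q : ZMod d) := hh d n hdp
      _ ≤ h * (A.card ^ k * M) := by gcongr
      _ = h * M * A.card ^ k := by ring
  have hkK : k < K := by
    by_contra! hle
    exact (hK k hle).not_ge (by exact_mod_cast hpow)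
  exact hdk.le.trans (Nat.pow_le_pow_right hq.le hkK)

end Kset

section Dset

variable {p : ℕ} {x y : ℝ}

lemma sub_mem_Dset (hp : p ≠ 0) (hx : x ∈ Dset p) (hy : y ∈ Dset p) : x - y ∈ Dset p := by
  obtain ⟨n, hn, m, rfl⟩ := hx
  obtain ⟨n', -, m', rfl⟩ := hy
  refine ⟨n + n', by omega, m * p ^ n' - m' * p ^ n, ?_⟩
  push_cast
  field_simp
  ring

lemma natCast_mul_mem_Dset (hx : x ∈ Dset p) (N : ℕ) : N * x ∈ Dset p := by
  obtain ⟨n, hn, m, rfl⟩ := hx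
  exact ⟨n, hn, N * m, by push_cast; ring⟩

lemma exists_rat_den_dvd_of_mem_Dset (hx : x ∈ Dset p) :
    ∃ r : ℚ, (r : ℝ) = x ∧ ∃ n : ℕ, r.den ∣ p ^ n := by
  obtain ⟨n, -, m, rfl⟩ := hx
  refine ⟨Rat.divInt m (p ^ n : ℕ), by simp [Rat.divInt_eq_div], n, ?_⟩
  exact_mod_cast Rat.den_dvd m (p ^ n : ℕ)

end Dset

theorem finite_Dset_inter_Kset {p q : ℕ} (hq : 1 < q) (hpq : p.Coprime q) {B : Finset ℚ}
    (hB : B.card < q) : (Dset p ∩ Kset q B).Finite := by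
  obtain ⟨N, hN, hNB⟩ := exists_pos_forall_mul_eq_intCast B
  obtain ⟨D, hD⟩ := exists_forall_denom_le_of_mem_numerators hq hpq hB hN hNB
  have hfin : (⋃ d ∈ Set.Icc 1 D,
      (fun m : ℤ => (m : ℝ) / (N * d)) '' numerators q B (N * d)).Finite := by
    refine (Set.finite_Icc 1 D).biUnion fun d hd => (finite_numerators hq B ?_).image _
    have : 0 < d := hd.1
    positivity
  refine hfin.subset fun x ⟨hxD, hxK⟩ => ?_
  obtain ⟨r, hr, n, hrn⟩ := exists_rat_den_dvd_of_mem_Dset (natCast_mul_mem_Dset hxD N)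
  have hx : (r.num : ℝ) / (N * r.den) = x := by
    have hr' : (r : ℝ) = r.num / r.den := by exact_mod_cast (Rat.num_div_den r).symm
    rw [mul_comm, ← div_div, ← hr', hr, mul_div_cancel_left₀ _ (by positivity)]
  have hnum : r.num ∈ numerators q B (N * r.den) := by rwa [mem_numerators, hx]
  have hden : r.den ≤ D := hD r.den n r.num hrn r.den_pos r.isCoprime_num_den hnum
  exact Set.mem_biUnion ⟨r.den_pos, hden⟩ ⟨r.num, hnum, hx⟩

lemma finite_and_ncard_le_of_sub_mem {G : Type*} [AddGroup G] {E S : Set G} (hS : S.Finite)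
    (hES : ∀ x ∈ E, ∀ y ∈ E, x - y ∈ S) : E.Finite ∧ E.ncard ≤ S.ncard := by
  rcases E.eq_empty_or_nonempty with rfl | ⟨y, hy⟩
  · simp
  have hmaps : Set.MapsTo (· - y) E S := fun x hx => hES x hx y hy
  have hinj : Set.InjOn (· - y) E := (sub_left_injective (b := y)).injOn
  exact ⟨hS.of_injOn hmaps hinj, Set.ncard_le_ncard_of_injOn _ hmaps hinj hS⟩

theorem uniform_bound_of_card_le_sqrt_general {p q : ℕ} (hq : 1 < q) (hpq : p.Coprime q)
    {A : Finset ℚ} (hA : (A - A).card < q) :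
    ∃ M : ℕ, ∀ α : ℝ,
      (((fun x : ℝ => x + α) '' Dset p) ∩ Kset q A).Finite ∧
      (((fun x : ℝ => x + α) '' Dset p) ∩ Kset q A).ncard ≤ M := by
  have hp : p ≠ 0 := by
    rintro rfl
    exact hq.ne' (q.coprime_zero_left.mp hpq)
  refine ⟨(Dset p ∩ Kset q (A - A)).ncard, fun α => ?_⟩
  refine finite_and_ncard_le_of_sub_mem (finite_Dset_inter_Kset hq hpq hA) ?_
  rintro _ ⟨⟨x, hx, rfl⟩, hxK⟩ _ ⟨⟨y, hy, rfl⟩, hyK⟩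
  refine ⟨?_, sub_mem_Kset hq hxK hyK⟩
  simpa using sub_mem_Dset hp hx hy

theorem uniform_bound_of_card_le_sqrt (q : ℕ) (hq : 3 ≤ q)
    (A : Finset ℚ) (hA : 2 ≤ A.card) (hcard : (A.card : ℝ) ≤ Real.sqrt q)
    (p : ℕ) (hp : 2 ≤ p) (hpq : Nat.Coprime p q) :
    ∃ M : ℕ, ∀ α : ℝ,
      (((fun x : ℝ => x + α) '' Dset p) ∩ Kset q A).Finite ∧
      (((fun x : ℝ => x + α) '' Dset p) ∩ Kset q A).ncard ≤ M := by
  have hsq : A.card ^ 2 ≤ q := by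
    exact_mod_cast (Real.le_sqrt (Nat.cast_nonneg _) (Nat.cast_nonneg _)).mp hcard
  exact uniform_bound_of_card_le_sqrt_general (by omega) hpq
    ((card_sub_self_lt (Finset.one_lt_card_iff_nontrivial.mp hA)).trans_le hsq)
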